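/- Let Γ be a finite extensive-form game with perfect recall and suppose (β*, β̃*, μ*) satisfies the Nash characterization. Then for every i ∈ N and j ∈ M_i with S^i(I_i^j|β*) > 0, Σ_{a ∈ A(I_i^j)} β̃*^i_{I_i^j}(a) u^i(a, ϱ^i_{I_i^j}(β*^{-I_i^j}, β̃*), μ* | I_i^j) equals the maximum over all behavioral strategy profiles β̃ of Σ_{a ∈ A(I_i^j)} β̃^i_{I_i^j}(a) u^i(a, ϱ^i_{I_i^j}(β*^{-I_i^j}, β̃), μ* | I_i^j). -/

import Mathlib

open scoped Classical

noncomputable section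

/-- A finite extensive-form game.  Actions are labelled by natural numbers drawn from the
finite pool `actFinset`; a history is the list of actions taken so far; players are `Fin n`
and `P h = none` means that the chance player moves after `h`.  The information sets of
player `i` are `Info i j` for `j < m i`, and `infoIdx h` is the index of the information
set containing a nonterminal history `h` at which some player moves.  Payoffs `u i h` are
relevant on terminal histories. -/
structure EFG where
  n : ℕ
  actFinset : Finset ℕ
  H : Finset (List ℕ)
  P : List ℕ → Option (Fin n)
  fc : List ℕ → ℕ → ℝ
  m : Fin n → ℕ
  Info : Fin n → ℕ → Finset (List ℕ)
  infoIdx : List ℕ → ℕ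
  u : Fin n → List ℕ → ℝ
  empty_mem : ([] : List ℕ) ∈ H
  prefixClosed : ∀ h ∈ H, ∀ h' : List ℕ, h' <+: h → h' ∈ H
  act_mem : ∀ (h : List ℕ) (a : ℕ), h ++ [a] ∈ H → a ∈ actFinset
  fc_nonneg : ∀ h a, 0 ≤ fc h a
  fc_sum : ∀ h ∈ H, P h = none → (∃ a, h ++ [a] ∈ H) →
    ∑ a ∈ actFinset.filter (fun a => h ++ [a] ∈ H), fc h a = 1
  info_spec : ∀ (i : Fin n) (j : ℕ) (h : List ℕ), j < m i →
    (h ∈ Info i j ↔ h ∈ H ∧ P h = some i ∧ (∃ a, h ++ [a] ∈ H) ∧ infoIdx h = j)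
  infoIdx_lt : ∀ (i : Fin n), ∀ h ∈ H, P h = some i → (∃ a, h ++ [a] ∈ H) → infoIdx h < m i
  info_nonempty : ∀ (i : Fin n) (j : ℕ), j < m i → (Info i j).Nonempty
  info_actions : ∀ (i : Fin n) (j : ℕ), j < m i → ∀ h ∈ Info i j, ∀ h' ∈ Info i j,
    ∀ a : ℕ, (h ++ [a] ∈ H ↔ h' ++ [a] ∈ H)
  act_unique : ∀ (h h' : List ℕ) (a : ℕ), h ∈ H → h' ∈ H → h ++ [a] ∈ H → h' ++ [a] ∈ H →
    P h = P h' ∧ infoIdx h = infoIdx h'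

namespace EFG

/-- Behavioral strategy profiles (player, information-set index, action ↦ probability). -/
abbrev Profile (G : EFG) : Type := Fin G.n → ℕ → ℕ → ℝ

/-- Belief systems (player, information-set index, history ↦ probability). -/
abbrev Belief (G : EFG) : Type := Fin G.n → ℕ → List ℕ → ℝ

variable (G : EFG)

/-- The set `Z` of terminal histories. -/
def Zset : Finset (List ℕ) := G.H.filter fun h => ∀ a : ℕ, h ++ [a] ∉ G.H

/-- The set `A(h)` of actions available after a history. -/
def A (h : List ℕ) : Finset ℕ := G.actFinset.filter fun a => h ++ [a] ∈ G.H

/-- The common action set `A(I_i^j)` of an information set. -/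
def infoA (i : Fin G.n) (j : ℕ) : Finset ℕ := (G.Info i j).sup fun h => G.A h

/-- A behavioral strategy of player `i`: a probability distribution on `A(I_i^j)` for
each information set `I_i^j`. -/
def IsBehStrategy (i : Fin G.n) (b : ℕ → ℕ → ℝ) : Prop :=
  ∀ j < G.m i, (∀ a ∈ G.infoA i j, 0 ≤ b j a) ∧ ∑ a ∈ G.infoA i j, b j a = 1

/-- A behavioral strategy profile. -/
def IsBehProfile (β : G.Profile) : Prop := ∀ i : Fin G.n, G.IsBehStrategy i (β i)

/-- The probability of action `a` at history `h`: the chance distribution if the chance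
player moves, and the mover's behavioral strategy otherwise. -/
def moveProb (β : G.Profile) (h : List ℕ) (a : ℕ) : ℝ :=
  (G.P h).elim (G.fc h a) fun i => β i (G.infoIdx h) a

/-- Player `i`'s record `X_i` of the information sets he encounters along a history and the
actions he takes at them, accumulated starting from the prefix `pre`. -/
def recordFrom (i : Fin G.n) : List ℕ → List ℕ → List (ℕ × ℕ)
  | _, [] => []
  | pre, b :: rest =>
    (if G.P pre = some i then [(G.infoIdx pre, b)] else []) ++ recordFrom i (pre ++ [b]) rest

/-- Perfect recall. -/
def PerfectRecall : Prop :=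
  ∀ (i : Fin G.n) (j : ℕ), j < G.m i →
    ∀ h ∈ G.Info i j, ∀ h' ∈ G.Info i j, G.recordFrom i [] h = G.recordFrom i [] h'

/-- Product of the move probabilities along `rest`, continuing from the prefix `pre`. -/
def prodAlong (β : G.Profile) : List ℕ → List ℕ → ℝ
  | _, [] => 1
  | pre, b :: rest => G.moveProb β pre b * prodAlong β (pre ++ [b]) rest

/-- `ω(h|β)`: the probability that the moves along `h` are played under `β`. -/
def omega (β : G.Profile) (h : List ℕ) : ℝ := G.prodAlong β [] h

/-- `ω(I_i^j|β)`. -/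
def omegaInfo (i : Fin G.n) (j : ℕ) (β : G.Profile) : ℝ := ∑ h ∈ G.Info i j, G.omega β h

/-- Product of the move probabilities along `rest` from `pre`, disregarding player `i`'s
own moves. -/
def prodAlongNot (i : Fin G.n) (β : G.Profile) : List ℕ → List ℕ → ℝ
  | _, [] => 1
  | pre, b :: rest =>
    (if G.P pre = some i then 1 else G.moveProb β pre b) * prodAlongNot i β (pre ++ [b]) rest

/-- `S^i(h|β)`: probability of the moves along `h`, disregarding player `i`'s own moves. -/
def Sh (i : Fin G.n) (β : G.Profile) (h : List ℕ) : ℝ := G.prodAlongNot i β [] h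

/-- `S^i(I_i^j|β)`. -/
def SInfo (i : Fin G.n) (j : ℕ) (β : G.Profile) : ℝ := ∑ h ∈ G.Info i j, G.Sh i β h

/-- Product of the move probabilities along `rest` from `pre`, with the factor at prefixes
lying in `I_i^j` omitted. -/
def prodAlongSkip (i : Fin G.n) (j : ℕ) (β : G.Profile) : List ℕ → List ℕ → ℝ
  | _, [] => 1
  | pre, b :: rest =>
    (if pre ∈ G.Info i j then 1 else G.moveProb β pre b) * prodAlongSkip i j β (pre ++ [b]) rest

/-- `q ∈ M(a, I_i^j)`: `I_i^q` is a first information set of player `i` after action `a`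
(every history in `I_i^q` contains `a`, with no later action of `a` lying in any action set
of player `i`). -/
def FirstAfter (i : Fin G.n) (a : ℕ) (q : ℕ) : Prop :=
  q < G.m i ∧ ∀ h ∈ G.Info i q, ∃ l₁ l₂ : List ℕ,
    h = l₁ ++ a :: l₂ ∧ ∀ b ∈ l₂, ∀ p < G.m i, b ∉ G.infoA i p

/-- `q ∈ M(I_i^j) = ∪_{a ∈ A(I_i^j)} M(a, I_i^j)`. -/
def MInfo (i : Fin G.n) (j : ℕ) (q : ℕ) : Prop := ∃ a ∈ G.infoA i j, G.FirstAfter i a q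

/-- `q ∈ Λ(a, I_i^j)`: every history in `I_i^q` contains the action `a`. -/
def LambdaSet (i : Fin G.n) (a : ℕ) (q : ℕ) : Prop :=
  q < G.m i ∧ ∀ h ∈ G.Info i q, ∃ l₁ l₂ : List ℕ, h = l₁ ++ a :: l₂

/-- `ϱ^i_{I_i^j}(β, β̃)`: replace player `i`'s component of `β` by that of `β̃` at every
information set `I_i^q` such that some history in `I_i^q` contains an action of `A(I_i^j)`. -/
def rho (i : Fin G.n) (j : ℕ) (β βt : G.Profile) : G.Profile := fun p q =>
  if p = i ∧ ∃ h ∈ G.Info i q, ∃ b ∈ h, b ∈ G.infoA i j then βt i q else β p q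

/-- A belief system: a probability distribution on each information set. -/
def IsBelief (μ : G.Belief) : Prop :=
  ∀ (i : Fin G.n) (j : ℕ), j < G.m i →
    (∀ h ∈ G.Info i j, 0 ≤ μ i j h) ∧ ∑ h ∈ G.Info i j, μ i j h = 1

/-- A self-independent belief system for `β`:
`S^i(I_i^j|β) · μ^i_{I_i^j}(h) = S^i(h|β)`. -/
def SelfIndep (β : G.Profile) (μ : G.Belief) : Prop :=
  ∀ (i : Fin G.n) (j : ℕ), j < G.m i → ∀ h ∈ G.Info i j,
    G.SInfo i j β * μ i j h = G.Sh i β h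

/-- Auxiliary for `ν`: scan `rest` from `pre` for the subhistory lying in `I_i^j`, then
weight by the belief and multiply the move probabilities of the remaining moves (the move
taken at the subhistory itself being skipped). -/
def nuAux (i : Fin G.n) (j : ℕ) (β : G.Profile) (w : List ℕ → ℝ) : List ℕ → List ℕ → ℝ
  | _, [] => 0
  | pre, b :: rest =>
    if pre ∈ G.Info i j then w pre * G.prodAlong β (pre ++ [b]) rest
    else nuAux i j β w (pre ++ [b]) rest

/-- `ν^i_{I_i^j}(h | a, β^{-I_i^j}, μ)` (it does not involve the component of `β` at
`I_i^j`). -/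
def nu (i : Fin G.n) (j : ℕ) (β : G.Profile) (μ : G.Belief) (h : List ℕ) : ℝ :=
  G.nuAux i j β (μ i j) [] h

/-- `u^i((a, β^{-I_i^j}) ∧ I_i^j)`. -/
def uWedgeAct (i : Fin G.n) (j : ℕ) (a : ℕ) (β : G.Profile) : ℝ :=
  ∑ h ∈ G.Zset.filter (fun h => a ∈ h), G.u i h * G.prodAlongSkip i j β [] h

/-- `u^i(β ∧ I_i^j)`. -/
def uWedge (i : Fin G.n) (j : ℕ) (β : G.Profile) : ℝ :=
  ∑ h ∈ G.Zset.filter (fun h => ∃ b ∈ h, b ∈ G.infoA i j), G.u i h * G.omega β h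

/-- The conditional expected payoff `u^i(a, β^{-I_i^j}, μ | I_i^j)`. -/
def uCond (i : Fin G.n) (j : ℕ) (a : ℕ) (β : G.Profile) (μ : G.Belief) : ℝ :=
  ∑ h ∈ G.Zset.filter (fun h => a ∈ h), G.u i h * G.nu i j β μ h

/-- The expected payoff `u^i(β)`. -/
def uExp (i : Fin G.n) (β : G.Profile) : ℝ := ∑ h ∈ G.Zset, G.u i h * G.omega β h

/-- The profile obtained from `β` by replacing all of player `i`'s components by `b`. -/
def replace (β : G.Profile) (i : Fin G.n) (b : ℕ → ℕ → ℝ) : G.Profile :=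
  fun p => if p = i then b else β p

/-- `β` is a Nash equilibrium in behavioral strategies. -/
def IsNash (β : G.Profile) : Prop :=
  G.IsBehProfile β ∧ ∀ (i : Fin G.n) (b : ℕ → ℕ → ℝ), G.IsBehStrategy i b →
    G.uExp i (G.replace β i b) ≤ G.uExp i β

/-- `(β, β̃, μ)` satisfies the Nash characterization (Definition 2 of the paper). -/
def NashChar (β βt : G.Profile) (μ : G.Belief) : Prop :=
  (∀ (i : Fin G.n) (j : ℕ), j < G.m i → ∀ a' ∈ G.infoA i j, ∀ a'' ∈ G.infoA i j,
    G.uWedgeAct i j a' (G.rho i j β βt) < G.uWedgeAct i j a'' (G.rho i j β βt) →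
    β i j a' = 0) ∧
  (∀ (i : Fin G.n) (j : ℕ), j < G.m i → ∀ a' ∈ G.infoA i j, ∀ a'' ∈ G.infoA i j,
    G.uCond i j a' (G.rho i j β βt) μ < G.uCond i j a'' (G.rho i j β βt) μ →
    βt i j a' = 0) ∧
  G.IsBelief μ ∧ G.SelfIndep β μ

/-- `r` is the root of a subgame: every information set lies entirely inside or entirely
outside the set of histories extending `r`. -/
def IsSubgameRoot (r : List ℕ) : Prop :=
  r ∈ G.H ∧ ∀ (i : Fin G.n) (j : ℕ), j < G.m i →
    (∀ h ∈ G.Info i j, r <+: h) ∨ ∀ h ∈ G.Info i j, ¬ r <+: h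

/-- The depth `g` of the smallest subgame containing `A(I_i^j)` (the length of the longest
subgame root preceding every history of `I_i^j`). -/
def sgDepthInfo (i : Fin G.n) (j : ℕ) : ℕ :=
  (G.H.filter fun r => G.IsSubgameRoot r ∧ ∀ h ∈ G.Info i j, r <+: h).sup List.length

/-- The depth `q(h)` of the smallest subgame containing the last action of `h`. -/
def sgDepthHist (h : List ℕ) : ℕ :=
  (G.H.filter fun r => G.IsSubgameRoot r ∧ r <+: h.dropLast).sup List.length

/-- `C^i_{I_i^j}(h|β)`: product of move probabilities along `h` within the smallest subgame
containing `A(I_i^j)`. -/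
def Ch (i : Fin G.n) (j : ℕ) (β : G.Profile) (h : List ℕ) : ℝ :=
  G.prodAlong β (h.take (G.sgDepthInfo i j)) (h.drop (G.sgDepthInfo i j))

/-- `C^i_{I_i^j}(I_i^j|β)`. -/
def CInfo (i : Fin G.n) (j : ℕ) (β : G.Profile) : ℝ := ∑ h ∈ G.Info i j, G.Ch i j β h

/-- `u^i((a, β^{-I_i^j}) ⋄ I_i^j)`. -/
def uDiamondAct (i : Fin G.n) (j : ℕ) (a : ℕ) (β : G.Profile) : ℝ :=
  ∑ h ∈ G.Zset.filter (fun h => a ∈ h), G.u i h *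
    G.prodAlongSkip i j β (h.take (G.sgDepthInfo i j)) (h.drop (G.sgDepthInfo i j))

/-- `Y^i(h|β)`: like `S^i(h|β)` but within the smallest subgame containing the last action
of `h`. -/
def Yh (i : Fin G.n) (β : G.Profile) (h : List ℕ) : ℝ :=
  G.prodAlongNot i β (h.take (G.sgDepthHist h)) (h.drop (G.sgDepthHist h))

/-- `Y^i(I_i^j|β)`. -/
def YInfo (i : Fin G.n) (j : ℕ) (β : G.Profile) : ℝ := ∑ h ∈ G.Info i j, G.Yh i β h

/-- The belief condition `Y^i(I_i^j|β) · μ^i_{I_i^j}(h) = Y^i(h|β)`. -/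
def YConsistent (β : G.Profile) (μ : G.Belief) : Prop :=
  ∀ (i : Fin G.n) (j : ℕ), j < G.m i → ∀ h ∈ G.Info i j,
    G.YInfo i j β * μ i j h = G.Yh i β h

/-- The expected payoff of player `i` in the subgame rooted at `r` (payoffs of terminal
histories extending `r`, weighted by the move probabilities within the subgame). -/
def uExpFrom (i : Fin G.n) (β : G.Profile) (r : List ℕ) : ℝ :=
  ∑ h ∈ G.Zset.filter (fun h => r <+: h), G.u i h * G.prodAlong β r (h.drop r.length)

/-- `β` is a subgame perfect equilibrium in behavioral strategies: its restriction to every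
subgame is a Nash equilibrium in behavioral strategies of that subgame. -/
def IsSubgamePerfect (β : G.Profile) : Prop :=
  G.IsBehProfile β ∧ ∀ r : List ℕ, G.IsSubgameRoot r →
    ∀ (i : Fin G.n) (b : ℕ → ℕ → ℝ), G.IsBehStrategy i b →
      G.uExpFrom i (G.replace β i b) r ≤ G.uExpFrom i β r

/-- `(β, β̃, μ)` satisfies the subgame perfect characterization (Definition 6 of the
paper). -/
def SubgameChar (β βt : G.Profile) (μ : G.Belief) : Prop :=
  (∀ (i : Fin G.n) (j : ℕ), j < G.m i → ∀ a' ∈ G.infoA i j, ∀ a'' ∈ G.infoA i j,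
    G.uDiamondAct i j a' (G.rho i j β βt) < G.uDiamondAct i j a'' (G.rho i j β βt) →
    β i j a' = 0) ∧
  (∀ (i : Fin G.n) (j : ℕ), j < G.m i → ∀ a' ∈ G.infoA i j, ∀ a'' ∈ G.infoA i j,
    G.uCond i j a' (G.rho i j β βt) μ < G.uCond i j a'' (G.rho i j β βt) μ →
    βt i j a' = 0) ∧
  G.IsBelief μ ∧ G.YConsistent β μ

/-- `(β, μ)` is a semi-sequential equilibrium. -/
def SemiSeqEq (β : G.Profile) (μ : G.Belief) : Prop :=
  G.IsBehProfile β ∧ G.IsBelief μ ∧ G.SelfIndep β μ ∧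
  ∀ (i : Fin G.n) (j : ℕ), j < G.m i → ∀ a' ∈ G.infoA i j, ∀ a'' ∈ G.infoA i j,
    G.uCond i j a' β μ < G.uCond i j a'' β μ → β i j a' = 0

/-- `(β, μ)` is a subgame perfect semi-sequential equilibrium. -/
def SubgameSemiSeqEq (β : G.Profile) (μ : G.Belief) : Prop :=
  G.IsBehProfile β ∧ G.IsBelief μ ∧ G.YConsistent β μ ∧
  ∀ (i : Fin G.n) (j : ℕ), j < G.m i → ∀ a' ∈ G.infoA i j, ∀ a'' ∈ G.infoA i j,
    G.uCond i j a' β μ < G.uCond i j a'' β μ → β i j a' = 0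

/-- `d(I_i^j)`: the number of information sets of player `i` containing a prefix of some
history of `I_i^j` (counting `I_i^j` itself). -/
def dInfo (i : Fin G.n) (j : ℕ) : ℕ :=
  ((Finset.range (G.m i)).filter
    (fun q => ∃ h ∈ G.Info i j, ∃ p : List ℕ, p <+: h ∧ p ∈ G.Info i q)).card

end EFG

namespace EFG

theorem aux_prefix_mem (G : EFG) {h : List ℕ} {r : List ℕ} (hh : h ++ r ∈ G.H) : h ∈ G.H :=
  G.prefixClosed _ hh _ (List.prefix_append _ _)

theorem aux_mem_A (G : EFG) (h : List ℕ) (a : ℕ) : a ∈ G.A h ↔ h ++ [a] ∈ G.H := by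
  unfold A
  rw [Finset.mem_filter]
  exact ⟨fun h => h.2, fun hh => ⟨G.act_mem _ _ hh, hh⟩⟩

theorem aux_infoA_eq (G : EFG) (i : Fin G.n) (j : ℕ) (hj : j < G.m i) (h : List ℕ)
    (hh : h ∈ G.Info i j) : G.infoA i j = G.A h := by
  ext a
  unfold infoA
  rw [Finset.mem_sup]
  constructor
  · rintro ⟨h', hh', ha⟩
    rw [aux_mem_A] at *
    exact (G.info_actions i j hj h hh h' hh' a).2 ha
  · intro ha
    exact ⟨h, hh, ha⟩

theorem aux_mem_info (G : EFG) (i : Fin G.n) (h : List ℕ) (b : ℕ) (hb : h ++ [b] ∈ G.H)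
    (hP : G.P h = some i) : G.infoIdx h < G.m i ∧ h ∈ G.Info i (G.infoIdx h) := by
  have hH := G.aux_prefix_mem hb
  have := G.infoIdx_lt i h hH hP ⟨b, hb⟩
  exact ⟨this, (G.info_spec i _ h this).2 ⟨hH, hP, ⟨b, hb⟩, rfl⟩⟩

theorem aux_moveProb_nonneg (G : EFG) (β : G.Profile) (hβ : G.IsBehProfile β) (h : List ℕ) (b : ℕ)
    (hb : h ++ [b] ∈ G.H) : 0 ≤ G.moveProb β h b := by
  unfold moveProb
  cases hP : G.P h with
  | none => exact G.fc_nonneg _ _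
  | some p =>
    obtain ⟨h1, h2⟩ := G.aux_mem_info p h b hb hP
    refine (hβ p _ h1).1 b ?_
    rw [G.aux_infoA_eq p _ h1 h h2, aux_mem_A]
    exact hb

theorem aux_prodAlong_append (G : EFG) (β : G.Profile) (l : List ℕ) : ∀ (pre r : List ℕ),
    G.prodAlong β pre (l ++ r) = G.prodAlong β pre l * G.prodAlong β (pre ++ l) r := by
  induction l with
  | nil => intro pre r; simp [prodAlong]
  | cons b l ih => intro pre r; simp [prodAlong, ih, mul_assoc]

theorem aux_prodAlongNot_append (G : EFG) (i : Fin G.n) (β : G.Profile) (l : List ℕ) :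
    ∀ (pre r : List ℕ),
    G.prodAlongNot i β pre (l ++ r) = G.prodAlongNot i β pre l * G.prodAlongNot i β (pre ++ l) r := by
  induction l with
  | nil => intro pre r; simp [prodAlongNot]
  | cons b l ih => intro pre r; simp only [List.cons_append, prodAlongNot, ih, mul_assoc, List.append_assoc, List.nil_append]

theorem aux_record_append (G : EFG) (i : Fin G.n) (l : List ℕ) :
    ∀ (pre r : List ℕ),
    G.recordFrom i pre (l ++ r) = G.recordFrom i pre l ++ G.recordFrom i (pre ++ l) r := by
  induction l with
  | nil => intro pre r; simp [recordFrom]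
  | cons b l ih => intro pre r; simp only [List.cons_append, recordFrom, ih, List.append_assoc, List.nil_append]

theorem aux_Sh_snoc (G : EFG) (i : Fin G.n) (β : G.Profile) (h : List ℕ) (b : ℕ) :
    G.Sh i β (h ++ [b]) = G.Sh i β h * (if G.P h = some i then 1 else G.moveProb β h b) := by
  simp [Sh, aux_prodAlongNot_append, prodAlongNot]

theorem aux_Sh_nonneg (G : EFG) (i : Fin G.n) (β : G.Profile) (hβ : G.IsBehProfile β)
    (h : List ℕ) : h ∈ G.H → 0 ≤ G.Sh i β h := by
  induction h using List.reverseRecOn with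
  | nil => intro _; simp [Sh, prodAlongNot]
  | append_singleton h b ih =>
    intro hb
    rw [aux_Sh_snoc]
    refine mul_nonneg (ih (G.aux_prefix_mem hb)) ?_
    split_ifs
    · exact zero_le_one
    · exact G.aux_moveProb_nonneg β hβ h b hb

/-- An information set is met at most once along a history. -/
theorem aux_unique (G : EFG) (hPR : G.PerfectRecall) (i : Fin G.n) (j : ℕ) (hj : j < G.m i)
    (h h' : List ℕ) (hh : h ∈ G.Info i j) (hh' : h' ∈ G.Info i j) (hp : h <+: h') : h = h' := by
  obtain ⟨r, rfl⟩ := hp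
  cases r with
  | nil => simp
  | cons b r =>
    have := hPR i j hj _ hh _ hh'
    rw [aux_record_append] at this
    have hl := congrArg List.length this
    simp [recordFrom, ((G.info_spec i j h hj).1 hh).2.1] at hl

/-- Weighted sum over all continuations. -/
def auxT (G : EFG) (γ : G.Profile) (f : List ℕ → ℝ) (h : List ℕ) : ℝ :=
  ∑ h' ∈ G.H.filter (fun h' => h <+: h'), f h' * G.prodAlong γ h (h'.drop h.length)

theorem aux_sum_decomp (G : EFG) (F : List ℕ → ℝ) (h : List ℕ) (hh : h ∈ G.H) :
    ∑ h' ∈ G.H.filter (fun h' => h <+: h'), F h' =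
      F h + ∑ a ∈ G.A h, ∑ h' ∈ G.H.filter (fun h' => (h ++ [a]) <+: h'), F h' := by
  have hE : G.H.filter (fun h' => h <+: h') =
      insert h ((G.A h).biUnion fun a => G.H.filter (fun h' => (h ++ [a]) <+: h')) := by
    ext x
    simp only [Finset.mem_filter, Finset.mem_insert, Finset.mem_biUnion]
    constructor
    · rintro ⟨hx, r, rfl⟩
      cases r with
      | nil => left; simp
      | cons b r =>
        right
        have hp : (h ++ [b]) <+: (h ++ b :: r) := ⟨r, by simp⟩
        exact ⟨b, (G.aux_mem_A h b).2 (G.prefixClosed _ hx _ hp), hx, hp⟩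
    · rintro (rfl | ⟨a, _, hx, hp⟩)
      · exact ⟨hh, List.prefix_refl _⟩
      · exact ⟨hx, (List.prefix_append _ _).trans hp⟩
  rw [hE, Finset.sum_insert, Finset.sum_biUnion]
  · intro a _ b _ hab
    rw [Function.onFun, Finset.disjoint_left]
    intro x hx hx'
    rw [Finset.mem_filter] at hx hx'
    obtain ⟨r, rfl⟩ := hx.2
    obtain ⟨r', h'⟩ := hx'.2
    simp at h'
    exact hab h'.1.symm
  · simp only [Finset.mem_biUnion, Finset.mem_filter, not_exists, not_and]
    intro a _ _ hp
    have := hp.length_le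
    simp at this

theorem auxT_rec (G : EFG) (γ : G.Profile) (f : List ℕ → ℝ) (h : List ℕ) (hh : h ∈ G.H) :
    G.auxT γ f h = f h + ∑ a ∈ G.A h, G.moveProb γ h a * G.auxT γ f (h ++ [a]) := by
  unfold auxT
  rw [aux_sum_decomp G _ h hh]
  simp only [List.drop_length, prodAlong, mul_one]
  congr 1
  refine Finset.sum_congr rfl fun a _ => ?_
  rw [Finset.mul_sum]
  refine Finset.sum_congr rfl fun x hx => ?_
  rw [Finset.mem_filter] at hx
  obtain ⟨r, rfl⟩ := hx.2
  rw [List.drop_left, List.append_assoc, List.drop_left]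
  simp only [List.singleton_append, prodAlong]
  ring

theorem auxT_sub (G : EFG) (γ : G.Profile) (f g : List ℕ → ℝ) (h : List ℕ) :
    G.auxT γ f h - G.auxT γ g h = G.auxT γ (fun x => f x - g x) h := by
  simp [auxT, sub_mul, Finset.sum_sub_distrib]

theorem auxT_unique (G : EFG) (γ : G.Profile) (f X : List ℕ → ℝ)
    (hX : ∀ h ∈ G.H, X h = f h + ∑ a ∈ G.A h, G.moveProb γ h a * X (h ++ [a])) :
    ∀ (k : ℕ) (h : List ℕ), h ∈ G.H → G.H.sup List.length - h.length ≤ k → X h = G.auxT γ f h := by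
  intro k
  induction k with
  | zero =>
    intro h hh hk
    rw [hX h hh, auxT_rec G γ f h hh]
    congr 1
    refine Finset.sum_congr rfl fun a ha => ?_
    rw [aux_mem_A] at ha
    have := Finset.le_sup (f := List.length) ha
    rw [List.length_append, List.length_singleton] at this
    omega
  | succ k ih =>
    intro h hh hk
    rw [hX h hh, auxT_rec G γ f h hh]
    congr 1
    refine Finset.sum_congr rfl fun a ha => ?_
    rw [aux_mem_A] at ha
    rw [ih _ ha]
    rw [List.length_append, List.length_singleton]
    omega

/-- Payoff on terminal histories, zero elsewhere. -/
def auxU (G : EFG) (i : Fin G.n) (h : List ℕ) : ℝ := if h ∈ G.Zset then G.u i h else 0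

/-- Expected continuation payoff. -/
def auxV (G : EFG) (i : Fin G.n) (γ : G.Profile) (h : List ℕ) : ℝ := G.auxT γ (G.auxU i) h

/-- Local gain of `σ` over `τ`. -/
def auxD (G : EFG) (i : Fin G.n) (σ τ : G.Profile) (h : List ℕ) : ℝ :=
  ∑ a ∈ G.A h, (G.moveProb σ h a - G.moveProb τ h a) * G.auxV i σ (h ++ [a])

theorem aux_perf (G : EFG) (i : Fin G.n) (σ τ : G.Profile) (h : List ℕ) (hh : h ∈ G.H) :
    G.auxV i σ h - G.auxV i τ h = G.auxT τ (G.auxD i σ τ) h := by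
  have h1 := auxT_unique G τ (fun x => G.auxU i x + G.auxD i σ τ x) (G.auxV i σ) (by
    intro h hh
    have := auxT_rec G σ (G.auxU i) h hh
    unfold auxV auxD
    rw [this]
    simp only [sub_mul, Finset.sum_sub_distrib, auxV]
    ring) _ h hh le_rfl
  rw [h1]
  unfold auxV
  rw [auxT_sub]
  congr 1
  ext x
  ring

/-- Coefficient computed from a record. -/
def auxF (G : EFG) (i : Fin G.n) (j : ℕ) (τ : G.Profile) (L : List (ℕ × ℕ)) : ℝ :=
  L.foldl (fun x p => (x + if p.1 = j then 1 else 0) * τ i p.1 p.2) 0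

/-- Coefficient of a history. -/
def auxC (G : EFG) (i : Fin G.n) (j : ℕ) (τ : G.Profile) (h : List ℕ) : ℝ :=
  G.auxF i j τ (G.recordFrom i [] h) + if h ∈ G.Info i j then 1 else 0

theorem auxF_snoc (G : EFG) (i : Fin G.n) (j : ℕ) (hj : j < G.m i) (τ : G.Profile) (h : List ℕ)
    (b : ℕ) (hb : h ++ [b] ∈ G.H) :
    G.auxF i j τ (G.recordFrom i [] (h ++ [b])) =
      G.auxC i j τ h * (if G.P h = some i then G.moveProb τ h b else 1) := by
  rw [aux_record_append]
  have hspec := G.info_spec i j h hj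
  by_cases hP : G.P h = some i
  · have hm : (h ∈ G.Info i j) ↔ G.infoIdx h = j := by
      rw [hspec]
      exact ⟨fun x => x.2.2.2, fun x => ⟨G.aux_prefix_mem hb, hP, ⟨b, hb⟩, x⟩⟩
    simp [recordFrom, hP, auxF, auxC, moveProb, hm]
  · have hm : h ∉ G.Info i j := fun x => hP (hspec.1 x).2.1
    simp [recordFrom, hP, auxF, auxC, hm]

theorem auxC_nonneg (G : EFG) (i : Fin G.n) (j : ℕ) (hj : j < G.m i) (τ : G.Profile)
    (hτ : G.IsBehProfile τ) (h : List ℕ) : h ∈ G.H → 0 ≤ G.auxC i j τ h := by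
  have key : ∀ h, 0 ≤ G.auxF i j τ (G.recordFrom i [] h) → 0 ≤ G.auxC i j τ h := by
    intro h hh
    unfold auxC
    split_ifs <;> linarith
  induction h using List.reverseRecOn with
  | nil => intro _; apply key; simp [recordFrom, auxF]
  | append_singleton h b ih =>
    intro hb
    apply key
    rw [auxF_snoc G i j hj τ h b hb]
    refine mul_nonneg (ih (G.aux_prefix_mem hb)) ?_
    split_ifs
    · exact G.aux_moveProb_nonneg τ hτ h b hb
    · exact zero_le_one

theorem aux_weight (G : EFG) (i : Fin G.n) (j : ℕ) (hj : j < G.m i) (β τ : G.Profile)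
    (hτ : ∀ p, p ≠ i → τ p = β p) (h : List ℕ) : h ∈ G.H →
    ∑ x ∈ (G.Info i j).filter (fun x => x <+: h), G.Sh i β x * G.prodAlong τ x (h.drop x.length)
      = G.Sh i β h * G.auxC i j τ h := by
  induction h using List.reverseRecOn with
  | nil =>
    intro _
    simp [auxC, recordFrom, auxF, Finset.sum_filter, prodAlong]
  | append_singleton h b ih =>
    intro hb
    have ih' := ih (G.aux_prefix_mem hb)
    have hsplit : ∑ x ∈ (G.Info i j).filter (fun x => x <+: h ++ [b]),
        G.Sh i β x * G.prodAlong τ x ((h ++ [b]).drop x.length) =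
        (∑ x ∈ (G.Info i j).filter (fun x => x <+: h),
          G.Sh i β x * G.prodAlong τ x (h.drop x.length)) * G.moveProb τ h b
        + if h ++ [b] ∈ G.Info i j then G.Sh i β (h ++ [b]) else 0 := by
      have e1 : ∑ x ∈ (G.Info i j).filter (fun x => x <+: h),
          G.Sh i β x * G.prodAlong τ x ((h ++ [b]).drop x.length) =
        (∑ x ∈ (G.Info i j).filter (fun x => x <+: h),
          G.Sh i β x * G.prodAlong τ x (h.drop x.length)) * G.moveProb τ h b := by
        rw [Finset.sum_mul]
        refine Finset.sum_congr rfl fun x hx => ?_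
        obtain ⟨r, rfl⟩ := (Finset.mem_filter.1 hx).2
        rw [List.append_assoc, List.drop_left, List.drop_left, aux_prodAlong_append]
        simp [prodAlong, mul_assoc]
      rw [← e1]
      split_ifs with hI
      · have : (G.Info i j).filter (fun x => x <+: h ++ [b]) =
            insert (h ++ [b]) ((G.Info i j).filter (fun x => x <+: h)) := by
          ext x
          simp only [Finset.mem_filter, Finset.mem_insert, List.prefix_concat_iff]
          constructor
          · rintro ⟨h1, h2 | h2⟩
            · left; exact h2
            · right; exact ⟨h1, h2⟩
          · rintro (h1 | ⟨h1, h2⟩)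
            · subst h1; exact ⟨hI, Or.inl rfl⟩
            · exact ⟨h1, Or.inr h2⟩
        rw [this, Finset.sum_insert, add_comm]
        · simp [prodAlong]
        · simp only [Finset.mem_filter, not_and]
          intro _ hp
          have := hp.length_le
          simp at this
      · have : (G.Info i j).filter (fun x => x <+: h ++ [b]) =
            ((G.Info i j).filter (fun x => x <+: h)) := by
          ext x
          simp only [Finset.mem_filter, List.prefix_concat_iff]
          constructor
          · rintro ⟨h1, h2 | h2⟩
            · subst h2; exact absurd h1 hI
            · exact ⟨h1, h2⟩
          · rintro ⟨h1, h2⟩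
            exact ⟨h1, Or.inr h2⟩
        rw [this, add_zero]
    rw [hsplit, ih', auxC.eq_1 G i j τ (h ++ [b]), auxF_snoc G i j hj τ h b hb, mul_add, aux_Sh_snoc]
    congr 1
    · by_cases hP : G.P h = some i
      · simp [hP]; ring
      · have : G.moveProb τ h b = G.moveProb β h b := by
          unfold moveProb
          cases hP' : G.P h with
          | none => rfl
          | some p =>
            have : p ≠ i := fun e => hP (by rw [hP', e])
            simp [hτ p this]
        simp [hP, this]; ring
    · simp

theorem aux_nu (G : EFG) (i : Fin G.n) (j : ℕ) (γ : G.Profile) (w : List ℕ → ℝ) (a : ℕ)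
    (l₂ : List ℕ) (l : List ℕ) : ∀ pre : List ℕ, pre ++ l ∈ G.Info i j →
    (∀ x ∈ G.Info i j, x <+: pre ++ l → x = pre ++ l) →
    G.nuAux i j γ w pre (l ++ a :: l₂) = w (pre ++ l) * G.prodAlong γ (pre ++ l ++ [a]) l₂ := by
  induction l with
  | nil =>
    intro pre h1 _
    simp only [List.append_nil] at h1
    simp [nuAux, h1]
  | cons b l ih =>
    intro pre h1 h2
    have hn : pre ∉ G.Info i j := by
      intro hp
      have := h2 pre hp (List.prefix_append _ _)
      simp at this
    have e : pre ++ b :: l = pre ++ [b] ++ l := by simp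
    rw [e] at h1 h2 ⊢
    simp only [List.cons_append, nuAux, hn, if_false]
    exact ih _ h1 h2

theorem aux_prod_rho (G : EFG) (i : Fin G.n) (j : ℕ) (β βt : G.Profile) (a : ℕ)
    (ha : a ∈ G.infoA i j) (l : List ℕ) : ∀ pre : List ℕ, a ∈ pre → pre ++ l ∈ G.H →
    G.prodAlong (G.rho i j β βt) pre l = G.prodAlong (G.replace β i (βt i)) pre l := by
  induction l with
  | nil => intro _ _ _; rfl
  | cons b l ih =>
    intro pre hpre hH
    have e : pre ++ b :: l = pre ++ [b] ++ l := by simp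
    rw [e] at hH
    have hb := G.aux_prefix_mem hH
    simp only [prodAlong]
    rw [ih (pre ++ [b]) (by simp [hpre]) hH]
    congr 1
    unfold moveProb
    cases hP : G.P pre with
    | none => rfl
    | some p =>
      simp only [Option.elim, rho, replace]
      by_cases hp : p = i
      · subst hp
        have hm := G.aux_mem_info p pre b hb hP
        rw [if_pos ⟨rfl, pre, hm.2, a, hpre, ha⟩, if_pos rfl]
      · rw [if_neg (fun x => hp x.1), if_neg hp]

theorem aux_uCond (G : EFG) (hPR : G.PerfectRecall) (i : Fin G.n) (j : ℕ) (hj : j < G.m i)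
    (β βt : G.Profile) (μ : G.Belief) (a : ℕ) (ha : a ∈ G.infoA i j) :
    G.uCond i j a (G.rho i j β βt) μ =
      ∑ h ∈ G.Info i j, μ i j h * G.auxV i (G.replace β i (βt i)) (h ++ [a]) := by
  have hZ : G.Zset ⊆ G.H := Finset.filter_subset _ _
  have hR : ∀ h ∈ G.Info i j, μ i j h * G.auxV i (G.replace β i (βt i)) (h ++ [a]) =
      ∑ z ∈ G.Zset, if (h ++ [a]) <+: z then
        μ i j h * (G.u i z * G.prodAlong (G.replace β i (βt i)) (h ++ [a])
          (z.drop (h ++ [a]).length)) else 0 := by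
    intro h _
    unfold auxV auxT auxU
    rw [Finset.mul_sum, ← Finset.sum_filter, Finset.sum_filter, Finset.sum_filter]
    rw [← Finset.sum_subset hZ]
    · refine Finset.sum_congr rfl fun z hz => ?_
      simp only [hz, if_true]
    · intro z _ hz
      simp [hz]
  rw [Finset.sum_congr rfl hR, Finset.sum_comm]
  unfold uCond
  rw [Finset.sum_filter]
  refine Finset.sum_congr rfl fun z hz => ?_
  have hzH := hZ hz
  split_ifs with haz
  · obtain ⟨l, l₂, rfl⟩ := List.append_of_mem haz
    have e : l ++ a :: l₂ = l ++ [a] ++ l₂ := by simp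
    have hla : l ++ [a] ∈ G.H := by rw [e] at hzH; exact G.aux_prefix_mem hzH
    have hl : l ∈ G.H := G.aux_prefix_mem hla
    obtain ⟨h0, hh0⟩ := G.info_nonempty i j hj
    have s0 := (G.info_spec i j h0 hj).1 hh0
    have ha0 : h0 ++ [a] ∈ G.H := by
      rwa [G.aux_infoA_eq i j hj h0 hh0, aux_mem_A] at ha
    have hu := G.act_unique l h0 a hl s0.1 hla ha0
    have hlI : l ∈ G.Info i j :=
      (G.info_spec i j l hj).2 ⟨hl, hu.1.trans s0.2.1, ⟨a, hla⟩, hu.2.trans s0.2.2.2⟩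
    rw [Finset.sum_eq_single l]
    · rw [if_pos ⟨l₂, by simp⟩]
      unfold nu
      rw [aux_nu G i j _ (μ i j) a l₂ l [] hlI
        (fun x hx hp => G.aux_unique hPR i j hj _ _ hx hlI hp)]
      rw [e, List.drop_left, List.nil_append]
      rw [aux_prod_rho G i j β βt a ha l₂ (l ++ [a]) (by simp) (by rwa [← e])]
      ring
    · intro h hh hne
      rw [if_neg]
      intro hp
      apply hne
      have hp1 : h <+: l ++ a :: l₂ := (List.prefix_append _ _).trans hp
      rcases List.prefix_or_prefix_of_prefix hp1 (List.prefix_append l (a :: l₂)) with h1 | h1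
      · exact G.aux_unique hPR i j hj _ _ hh hlI h1
      · exact (G.aux_unique hPR i j hj _ _ hlI hh h1).symm
    · intro hc; exact absurd hlI hc
  · symm
    refine Finset.sum_eq_zero fun h _ => ?_
    rw [if_neg]
    intro hp
    exact haz (hp.subset (by simp))

theorem aux_argmax {s : Finset ℕ} (p q U : ℕ → ℝ) (hp : ∀ a ∈ s, 0 ≤ p a)
    (hq : ∀ a ∈ s, 0 ≤ q a) (hp1 : ∑ a ∈ s, p a = 1) (hq1 : ∑ a ∈ s, q a = 1)
    (hU : ∀ a ∈ s, ∀ b ∈ s, U a < U b → p a = 0) :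
    ∑ a ∈ s, q a * U a ≤ ∑ a ∈ s, p a * U a := by
  have e1 : ∑ a ∈ s, q a * U a = ∑ a ∈ s, ∑ b ∈ s, p b * (q a * U a) := by
    simp [← Finset.sum_mul, hp1]
  have e2 : ∑ a ∈ s, p a * U a = ∑ b ∈ s, ∑ a ∈ s, q b * (p a * U a) := by
    simp only [← Finset.mul_sum]
    rw [← Finset.sum_mul, hq1, one_mul]
  rw [e1, e2]
  refine Finset.sum_le_sum fun a ha => Finset.sum_le_sum fun b hb => ?_
  by_cases h : U b < U a
  · rw [hU b hb a ha h]; simp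
  · have := mul_le_mul_of_nonneg_left (not_lt.1 h) (mul_nonneg (hp b hb) (hq a ha))
    linarith

theorem aux_replace_beh (G : EFG) (β βt : G.Profile) (i : Fin G.n) (hβ : G.IsBehProfile β)
    (hβt : G.IsBehProfile βt) : G.IsBehProfile (G.replace β i (βt i)) := by
  intro p
  unfold replace
  split_ifs with h
  · subst h; exact hβt p
  · exact hβ p

theorem aux_SInfo_mul (G : EFG) (hPR : G.PerfectRecall) (i : Fin G.n) (j : ℕ) (hj : j < G.m i)
    (β βt : G.Profile) (μ : G.Belief) (hμ : G.SelfIndep β μ) (a : ℕ) (ha : a ∈ G.infoA i j) :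
    G.SInfo i j β * G.uCond i j a (G.rho i j β βt) μ =
      ∑ h ∈ G.Info i j, G.Sh i β h * G.auxV i (G.replace β i (βt i)) (h ++ [a]) := by
  rw [aux_uCond G hPR i j hj β βt μ a ha, Finset.mul_sum]
  refine Finset.sum_congr rfl fun h hh => ?_
  rw [← mul_assoc, hμ i j hj h hh]

theorem aux_moveProb_info (G : EFG) (i : Fin G.n) (j : ℕ) (hj : j < G.m i)
    (β βt : G.Profile) (h : List ℕ) (hh : h ∈ G.Info i j) (a : ℕ) :
    G.moveProb (G.replace β i (βt i)) h a = βt i j a := by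
  have s := (G.info_spec i j h hj).1 hh
  simp [moveProb, s.2.1, s.2.2.2, replace]

theorem aux_SInfo_total (G : EFG) (hPR : G.PerfectRecall) (i : Fin G.n) (j : ℕ) (hj : j < G.m i)
    (β βt : G.Profile) (μ : G.Belief) (hμ : G.SelfIndep β μ) :
    G.SInfo i j β * ∑ a ∈ G.infoA i j, βt i j a * G.uCond i j a (G.rho i j β βt) μ =
      ∑ h ∈ G.Info i j, G.Sh i β h * G.auxV i (G.replace β i (βt i)) h := by
  rw [Finset.mul_sum]
  have e : ∀ a ∈ G.infoA i j, G.SInfo i j β * (βt i j a * G.uCond i j a (G.rho i j β βt) μ) =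
      ∑ h ∈ G.Info i j, βt i j a *
        (G.Sh i β h * G.auxV i (G.replace β i (βt i)) (h ++ [a])) := by
    intro a ha
    rw [mul_left_comm, aux_SInfo_mul G hPR i j hj β βt μ hμ a ha, Finset.mul_sum]
  rw [Finset.sum_congr rfl e, Finset.sum_comm]
  refine Finset.sum_congr rfl fun h hh => ?_
  have s := (G.info_spec i j h hj).1 hh
  have hz : G.auxU i h = 0 := by
    unfold auxU
    rw [if_neg]
    intro hz
    obtain ⟨a, ha⟩ := s.2.2.1
    exact (Finset.mem_filter.1 hz).2 a ha
  have := G.auxT_rec (G.replace β i (βt i)) (G.auxU i) h s.1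
  unfold auxV
  rw [this, hz, zero_add, Finset.mul_sum, G.aux_infoA_eq i j hj h hh]
  refine Finset.sum_congr rfl fun a _ => ?_
  rw [aux_moveProb_info G i j hj β βt h hh]
  ring

theorem aux_main (G : EFG) (hPR : G.PerfectRecall)
    (β βt βt' : G.Profile) (μ : G.Belief)
    (hβ : G.IsBehProfile β) (hβt : G.IsBehProfile βt) (hβt' : G.IsBehProfile βt')
    (hchar : G.NashChar β βt μ) (i : Fin G.n) (j : ℕ) (hj : j < G.m i) :
    0 ≤ ∑ h ∈ G.Info i j, G.Sh i β h *
      (G.auxV i (G.replace β i (βt i)) h - G.auxV i (G.replace β i (βt' i)) h) := by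
  obtain ⟨-, hii, -, hμ⟩ := hchar
  set σ := G.replace β i (βt i) with hσ
  set τ := G.replace β i (βt' i) with hτ
  have hτb : G.IsBehProfile τ := aux_replace_beh G β βt' i hβ hβt'
  have hIH : ∀ h ∈ G.Info i j, h ∈ G.H := fun h hh => ((G.info_spec i j h hj).1 hh).1
  have step1 : ∑ h ∈ G.Info i j, G.Sh i β h * (G.auxV i σ h - G.auxV i τ h) =
      ∑ x ∈ G.H, G.auxD i σ τ x * (G.Sh i β x * G.auxC i j τ x) := by
    have e1 : ∀ h ∈ G.Info i j, G.Sh i β h * (G.auxV i σ h - G.auxV i τ h) =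
        ∑ x ∈ G.H, if h <+: x then
          G.auxD i σ τ x * (G.Sh i β h * G.prodAlong τ h (x.drop h.length)) else 0 := by
      intro h hh
      rw [G.aux_perf i σ τ h (hIH h hh), auxT, Finset.mul_sum, Finset.sum_filter]
      refine Finset.sum_congr rfl fun x _ => ?_
      split_ifs
      · ring
      · rfl
    rw [Finset.sum_congr rfl e1, Finset.sum_comm]
    refine Finset.sum_congr rfl fun x hx => ?_
    rw [← aux_weight G i j hj β τ (fun p hp => by simp [hτ, replace, hp]) x hx,
      Finset.mul_sum, Finset.sum_filter]
  rw [step1]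
  have step2 : ∑ x ∈ G.H, G.auxD i σ τ x * (G.Sh i β x * G.auxC i j τ x) =
      ∑ x ∈ G.H.filter (fun x => G.P x = some i ∧ ∃ a, x ++ [a] ∈ G.H),
        G.auxD i σ τ x * (G.Sh i β x * G.auxC i j τ x) := by
    symm
    refine Finset.sum_filter_of_ne fun x _ hne => ?_
    by_contra hcon
    apply hne
    have : G.auxD i σ τ x = 0 := by
      unfold auxD
      refine Finset.sum_eq_zero fun a ha => ?_
      rw [aux_mem_A] at ha
      have hP : G.P x ≠ some i := fun hP => hcon ⟨hP, a, ha⟩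
      have : G.moveProb σ x a = G.moveProb τ x a := by
        unfold moveProb
        cases hP' : G.P x with
        | none => rfl
        | some p =>
          have : p ≠ i := fun e => hP (by rw [hP', e])
          simp [hσ, hτ, replace, this]
      rw [this, sub_self, zero_mul]
    rw [this, zero_mul]
  rw [step2, ← Finset.sum_fiberwise_of_maps_to (t := Finset.range (G.m i)) (g := G.infoIdx)]
  · refine Finset.sum_nonneg fun q hq => ?_
    rw [Finset.mem_range] at hq
    have hfib : (G.H.filter (fun x => G.P x = some i ∧ ∃ a, x ++ [a] ∈ G.H)).filter
        (fun x => G.infoIdx x = q) = G.Info i q := by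
      ext x
      rw [G.info_spec i q x hq]
      simp only [Finset.mem_filter]
      tauto
    rw [hfib]
    obtain ⟨h0, hh0⟩ := G.info_nonempty i q hq
    have s0 := (G.info_spec i q h0 hq).1 hh0
    have hC : ∀ x ∈ G.Info i q, G.auxC i j τ x = G.auxC i j τ h0 := by
      intro x hx
      have sx := (G.info_spec i q x hq).1 hx
      unfold auxC
      rw [hPR i q hq x hx h0 hh0]
      congr 1
      have : x ∈ G.Info i j ↔ h0 ∈ G.Info i j := by
        rw [G.info_spec i j x hj, G.info_spec i j h0 hj]
        simp [sx.1, sx.2.1, sx.2.2.1, sx.2.2.2, s0.1, s0.2.1, s0.2.2.1, s0.2.2.2]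
      simp only [this]
    have hval : ∑ x ∈ G.Info i q, G.auxD i σ τ x * (G.Sh i β x * G.auxC i j τ x) =
        G.auxC i j τ h0 * (G.SInfo i q β *
          (∑ a ∈ G.infoA i q, βt i q a * G.uCond i q a (G.rho i q β βt) μ -
           ∑ a ∈ G.infoA i q, βt' i q a * G.uCond i q a (G.rho i q β βt) μ)) := by
      have e1 : ∀ x ∈ G.Info i q, G.auxD i σ τ x * (G.Sh i β x * G.auxC i j τ x) =
          G.auxC i j τ h0 * ∑ a ∈ G.infoA i q, (βt i q a - βt' i q a) *
            (G.Sh i β x * G.auxV i σ (x ++ [a])) := by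
        intro x hx
        rw [hC x hx, auxD, G.aux_infoA_eq i q hq x hx, Finset.sum_mul, Finset.mul_sum]
        refine Finset.sum_congr rfl fun a _ => ?_
        rw [hσ, hτ, aux_moveProb_info G i q hq β βt x hx, aux_moveProb_info G i q hq β βt' x hx]
        ring
      rw [Finset.sum_congr rfl e1, ← Finset.mul_sum, Finset.sum_comm, ← Finset.sum_sub_distrib]
      congr 1
      rw [Finset.mul_sum]
      refine Finset.sum_congr rfl fun a ha => ?_
      rw [← Finset.mul_sum, hσ, ← aux_SInfo_mul G hPR i q hq β βt μ hμ a ha]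
      ring
    rw [hval]
    refine mul_nonneg (G.auxC_nonneg i j hj τ hτb h0 s0.1) (mul_nonneg ?_ ?_)
    · exact Finset.sum_nonneg fun x hx =>
        G.aux_Sh_nonneg i β hβ x ((G.info_spec i q x hq).1 hx).1
    · rw [sub_nonneg]
      exact aux_argmax (βt i q) (βt' i q) _ (hβt i q hq).1 (hβt' i q hq).1 (hβt i q hq).2
        (hβt' i q hq).2 (hii i q hq)
  · intro x hx
    obtain ⟨hx, hP, ha⟩ := Finset.mem_filter.1 hx
    exact Finset.mem_range.2 (G.infoIdx_lt i x hx hP ha)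

end EFG

/-- Equation (edneF): under the Nash characterization, at every information set with
`S^i(I_i^j|β*) > 0` the extra profile `β̃*` attains the maximum over all behavioral
strategy profiles `β̃` of `Σ_a β̃^i_{I_i^j}(a) · u^i(a, ϱ^i_{I_i^j}(β*^{-I_i^j}, β̃), μ* | I_i^j)`. -/
theorem stmt18 (G : EFG) (hPR : G.PerfectRecall)
    (β βt : G.Profile) (μ : G.Belief)
    (hβ : G.IsBehProfile β) (hβt : G.IsBehProfile βt)
    (hchar : G.NashChar β βt μ) :
    ∀ (i : Fin G.n) (j : ℕ), j < G.m i → 0 < G.SInfo i j β →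
      IsGreatest
        {x : ℝ | ∃ βt' : G.Profile, G.IsBehProfile βt' ∧
          x = ∑ a ∈ G.infoA i j, βt' i j a * G.uCond i j a (G.rho i j β βt') μ}
        (∑ a ∈ G.infoA i j, βt i j a * G.uCond i j a (G.rho i j β βt) μ) := by
  intro i j hj hS
  refine ⟨⟨βt, hβt, rfl⟩, ?_⟩
  rintro x ⟨βt', hβt', rfl⟩
  have hμ := hchar.2.2.2
  have h := G.aux_main hPR β βt βt' μ hβ hβt hβt' hchar i j hj
  simp only [mul_sub, Finset.sum_sub_distrib] at h
  rw [← G.aux_SInfo_total hPR i j hj β βt μ hμ, ← G.aux_SInfo_total hPR i j hj β βt' μ hμ,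
    sub_nonneg] at h
  exact le_of_mul_le_mul_left h hS
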